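/- In the KP tau-function setting, for all integers k, l and at every point of ℝ⁷, the tau function τ⁽⁰⁾ satisfies the bilinear identity (D_{x₁}² − D_{x₂} + 2aD_{x₁})τ_{k+1,l}⁽⁰⁾·τ_{k,l}⁽⁰⁾ = 0; written out, ∂_{x₁}²τ_{k+1,l}⁽⁰⁾·τ_{k,l}⁽⁰⁾ − 2∂_{x₁}τ_{k+1,l}⁽⁰⁾·∂_{x₁}τ_{k,l}⁽⁰⁾ + τ_{k+1,l}⁽⁰⁾·∂_{x₁}²τ_{k,l}⁽⁰⁾ − (∂_{x₂}τ_{k+1,l}⁽⁰⁾·τ_{k,l}⁽⁰⁾ − τ_{k+1,l}⁽⁰⁾·∂_{x₂}τ_{k,l}⁽⁰⁾) + 2a(∂_{x₁}τ_{k+1,l}⁽⁰⁾·τ_{k,l}⁽⁰⁾ − τ_{k+1,l}⁽⁰⁾·∂_{x₁}τ_{k,l}⁽⁰⁾) = 0. -/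

import Mathlib

open Complex Matrix

noncomputable section

/-- Partial derivative of a function on `ℝ⁷` in the `i`-th coordinate direction.
Coordinates: `0 ↦ x₁`, `1 ↦ x₂`, `2 ↦ x₃`, `3 ↦ x₋₁⁽¹⁾`, `4 ↦ x₋₁⁽²⁾`,
`5 ↦ y₁⁽¹⁾`, `6 ↦ y₁⁽²⁾`. -/
def pd (i : Fin 7) (f : (Fin 7 → ℝ) → ℂ) : (Fin 7 → ℝ) → ℂ :=
  fun X => deriv (fun s => f (Function.update X i s)) (X i)

/-- Border a square matrix with one extra column, one extra row, and corner entry `0`. -/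
def bord {n : ℕ} (M : Matrix (Fin n) (Fin n) ℂ) (col row : Fin n → ℂ) :
    Matrix (Fin (n + 1)) (Fin (n + 1)) ℂ :=
  Matrix.of fun i j =>
    if hi : (i : ℕ) < n then
      if hj : (j : ℕ) < n then M ⟨i, hi⟩ ⟨j, hj⟩ else col ⟨i, hi⟩
    else if hj : (j : ℕ) < n then row ⟨j, hj⟩ else 0

/-- Border a square matrix with two extra columns `c1, c2`, two extra rows `r1, r2`,
and a `2×2` zero corner block. -/
def bord2 {n : ℕ} (M : Matrix (Fin n) (Fin n) ℂ) (c1 c2 r1 r2 : Fin n → ℂ) :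
    Matrix (Fin (n + 2)) (Fin (n + 2)) ℂ :=
  Matrix.of fun i j =>
    if hi : (i : ℕ) < n then
      if hj : (j : ℕ) < n then M ⟨i, hi⟩ ⟨j, hj⟩
      else if (j : ℕ) = n then c1 ⟨i, hi⟩ else c2 ⟨i, hi⟩
    else if hj : (j : ℕ) < n then
      (if (i : ℕ) = n then r1 ⟨j, hj⟩ else r2 ⟨j, hj⟩)
    else 0

/-- The data of the KP tau-function setting. -/
structure KPData (N : ℕ) where
  a : ℂ
  b : ℂ
  p : Fin N → ℂ
  pb : Fin N → ℂ
  q : Fin N → ℂ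
  qb : Fin N → ℂ
  r : Fin N → ℂ
  rb : Fin N → ℂ
  xi0 : Fin N → ℂ
  xib0 : Fin N → ℂ
  Ct : Fin N → ℂ
  Cb : Fin N → ℂ
  Dt : Fin N → ℂ
  Db : Fin N → ℂ

namespace KPData

variable {N : ℕ} (K : KPData N)

/-- The nondegeneracy assumptions of the KP tau-function setting. -/
def Nondeg : Prop :=
  K.a ≠ 0 ∧ K.b ≠ 0 ∧
  (∀ i, K.p i ≠ K.a ∧ K.p i ≠ K.b) ∧
  (∀ i, K.pb i ≠ -K.a ∧ K.pb i ≠ -K.b) ∧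
  (∀ i j, K.p i + K.pb j ≠ 0) ∧
  (∀ i j, K.q i + K.qb j ≠ 0) ∧
  (∀ i j, K.r i + K.rb j ≠ 0)

/-- The phase `ξ_i`. -/
def xi (i : Fin N) (X : Fin 7 → ℝ) : ℂ :=
  K.p i * (X 0 : ℂ) + (K.p i) ^ 2 * (X 1 : ℂ) + (K.p i) ^ 3 * (X 2 : ℂ)
    + (X 3 : ℂ) / (K.p i - K.a) + (X 4 : ℂ) / (K.p i - K.b) + K.xi0 i

/-- The phase `ξ̄_j`. -/
def xib (j : Fin N) (X : Fin 7 → ℝ) : ℂ :=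
  K.pb j * (X 0 : ℂ) - (K.pb j) ^ 2 * (X 1 : ℂ) + (K.pb j) ^ 3 * (X 2 : ℂ)
    + (X 3 : ℂ) / (K.pb j + K.a) + (X 4 : ℂ) / (K.pb j + K.b) + K.xib0 j

/-- The phase `η_i = q_i y₁⁽¹⁾`. -/
def eta (i : Fin N) (X : Fin 7 → ℝ) : ℂ := K.q i * (X 5 : ℂ)

/-- The phase `η̄_j = q̄_j y₁⁽¹⁾`. -/
def etab (j : Fin N) (X : Fin 7 → ℝ) : ℂ := K.qb j * (X 5 : ℂ)

/-- The phase `χ_i = r_i y₁⁽²⁾`. -/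
def chi (i : Fin N) (X : Fin 7 → ℝ) : ℂ := K.r i * (X 6 : ℂ)

/-- The phase `χ̄_j = r̄_j y₁⁽²⁾`. -/
def chib (j : Fin N) (X : Fin 7 → ℝ) : ℂ := K.rb j * (X 6 : ℂ)

/-- The matrix entry `m_{ij}^{k,l}` (with integer exponents `k, l`). -/
def ment (k l : ℤ) (i j : Fin N) (X : Fin 7 → ℝ) : ℂ :=
  (1 / (K.p i + K.pb j)) * (-((K.p i - K.a) / (K.pb j + K.a))) ^ k
      * (-((K.p i - K.b) / (K.pb j + K.b))) ^ l
      * Complex.exp (K.xi i X + K.xib j X)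
    + K.Ct i * K.Cb j * Complex.exp (K.eta i X + K.etab j X) / (K.q i + K.qb j)
    + K.Dt i * K.Db j * Complex.exp (K.chi i X + K.chib j X) / (K.r i + K.rb j)

/-- The vector entry `Φ_{k,l,i}`. -/
def phi (k l : ℤ) (i : Fin N) (X : Fin 7 → ℝ) : ℂ :=
  (1 - K.p i / K.a) ^ k * (1 - K.p i / K.b) ^ l * Complex.exp (K.xi i X)

/-- The vector entry `Φ̄_{k,l,i}`. -/
def phib (k l : ℤ) (i : Fin N) (X : Fin 7 → ℝ) : ℂ :=
  (1 + K.pb i / K.a) ^ (-k) * (1 + K.pb i / K.b) ^ (-l) * Complex.exp (K.xib i X)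

/-- The vector entry `Ψ_i`. -/
def psi (i : Fin N) (X : Fin 7 → ℝ) : ℂ := K.Ct i * Complex.exp (K.eta i X)

/-- The vector entry `Ψ̄_i`. -/
def psib (i : Fin N) (X : Fin 7 → ℝ) : ℂ := K.Cb i * Complex.exp (K.etab i X)

/-- The vector entry `Υ_i`. -/
def ups (i : Fin N) (X : Fin 7 → ℝ) : ℂ := K.Dt i * Complex.exp (K.chi i X)

/-- The vector entry `Ῡ_i`. -/
def upsb (i : Fin N) (X : Fin 7 → ℝ) : ℂ := K.Db i * Complex.exp (K.chib i X)

/-- `τ_{k,l}⁽⁰⁾ = det M_{k,l}`. -/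
def tau0 (k l : ℤ) (X : Fin 7 → ℝ) : ℂ :=
  (Matrix.of fun i j => K.ment k l i j X).det

/-- `τ_{k,l}⁽¹⁾`: bordered with column `Φ_{k,l}` and row `-Ψ̄ᵀ`. -/
def tau1 (k l : ℤ) (X : Fin 7 → ℝ) : ℂ :=
  (bord (Matrix.of fun i j => K.ment k l i j X)
    (fun i => K.phi k l i X) (fun j => -K.psib j X)).det

/-- `τ̄_{k,l}⁽¹⁾`: bordered with column `Ψ` and row `-Φ̄_{k,l}ᵀ`. -/
def tau1b (k l : ℤ) (X : Fin 7 → ℝ) : ℂ :=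
  (bord (Matrix.of fun i j => K.ment k l i j X)
    (fun i => K.psi i X) (fun j => -K.phib k l j X)).det

/-- `τ_{k,l}⁽²⁾`: bordered with column `Φ_{k,l}` and row `-Ῡᵀ`. -/
def tau2 (k l : ℤ) (X : Fin 7 → ℝ) : ℂ :=
  (bord (Matrix.of fun i j => K.ment k l i j X)
    (fun i => K.phi k l i X) (fun j => -K.upsb j X)).det

/-- `τ̄_{k,l}⁽²⁾`: bordered with column `Υ` and row `-Φ̄_{k,l}ᵀ`. -/
def tau2b (k l : ℤ) (X : Fin 7 → ℝ) : ℂ :=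
  (bord (Matrix.of fun i j => K.ment k l i j X)
    (fun i => K.ups i X) (fun j => -K.phib k l j X)).det

/-- `τ_{k,l}⁽¹'²⁾`: double-bordered with columns `Φ_{k,l}`, `∂_{x₁}Φ_{k,l}` and rows
`-Ῡᵀ`, `-Ψ̄ᵀ`. -/
def tau12 (k l : ℤ) (X : Fin 7 → ℝ) : ℂ :=
  (bord2 (Matrix.of fun i j => K.ment k l i j X)
    (fun i => K.phi k l i X)
    (fun i => pd 0 (fun Y => K.phi k l i Y) X)
    (fun j => -K.upsb j X)
    (fun j => -K.psib j X)).det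

end KPData

/-!
The matrix `M_{k,l}` behind `τ_{k,l}⁽⁰⁾` satisfies `∂_{x₁} M_{k,l} = Φ_{k,l} Φ̄_{k,l}ᵀ`, has a
derivative of rank at most two in `x₂`, and obeys
`M_{k+1,l} = M_{k,l} - a⁻¹ Φ_{k,l} Φ̄_{k+1,l}ᵀ`. By Jacobi's formula all derivatives of the tau
functions are therefore values of the forms `(v, u) ↦ vᵀ adj(M) u`, and the bilinear identity
becomes the relation between these forms, and the determinants, of a matrix and of its rank-one
perturbation: the Sherman–Morrison formula, which is polynomial once multiplied by both determinants
and so needs no invertibility.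
-/

section Determinant

variable {m n R : Type*} [Fintype m] [DecidableEq m] [Fintype n] [DecidableEq n] [CommRing R]

theorem det_pow_card_mul_det_add_mul (A : Matrix n n R) (U : Matrix n m R) (V : Matrix m n R) :
    A.det ^ Fintype.card m * (A + U * V).det =
      A.det * (A.det • (1 : Matrix m m R) + V * A.adjugate * U).det := by
  have hblocks : fromBlocks A (-U) V 1 * fromBlocks 1 (A.adjugate * U) 0 (A.det • 1) =
      fromBlocks A 0 V (A.det • 1 + V * A.adjugate * U) := by
    simp [fromBlocks_multiply, ← Matrix.mul_assoc, mul_adjugate, add_comm]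
  have hdet := congrArg Matrix.det hblocks
  rw [det_mul, det_fromBlocks_one₂₂, Matrix.neg_mul, sub_neg_eq_add, det_fromBlocks_zero₂₁,
    det_fromBlocks_zero₁₂, det_smul, det_one, det_one] at hdet
  linear_combination hdet

open Polynomial in
theorem exists_isRegular_det_map_evalRingHom (A : Matrix n n R) :
    ∃ B : Matrix n n R[X], IsRegular B.det ∧ (evalRingHom 0).mapMatrix B = A := by
  refine ⟨(X : R[X]) • (1 : Matrix n n R[X]) + A.map C, Monic.isRegular ?_, ?_⟩
  · exact leadingCoeff_det_X_one_add_C A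
  · ext i j
    simp

-- The factor `det A` of the previous identity is cancelled at a generic matrix over `R[X]`, whose
-- determinant is a nonzerodivisor, and the result is specialized to `A`.
open Polynomial in
theorem det_pow_card_sub_one_mul_det_add_mul [Nonempty m] (A : Matrix n n R) (U : Matrix n m R)
    (V : Matrix m n R) :
    A.det ^ (Fintype.card m - 1) * (A + U * V).det =
      (A.det • (1 : Matrix m m R) + V * A.adjugate * U).det := by
  obtain ⟨B, hB, rfl⟩ := exists_isRegular_det_map_evalRingHom A
  let f := Polynomial.evalRingHom (0 : R)
  obtain ⟨U, rfl⟩ : ∃ U' : Matrix n m R[X], U'.map f = U := ⟨U.map C, by ext; simp [f]⟩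
  obtain ⟨V, rfl⟩ : ∃ V' : Matrix m n R[X], V'.map f = V := ⟨V.map C, by ext; simp [f]⟩
  have hlift : B.det ^ (Fintype.card m - 1) * (B + U * V).det =
      (B.det • (1 : Matrix m m R[X]) + V * B.adjugate * U).det := by
    refine hB.left ?_
    beta_reduce
    rw [← det_pow_card_mul_det_add_mul, ← mul_assoc, mul_pow_sub_one Fintype.card_ne_zero]
  have hsmul : f.mapMatrix (B.det • (1 : Matrix m m R[X])) = f B.det • 1 := by
    rw [smul_one_eq_diagonal, smul_one_eq_diagonal, RingHom.mapMatrix_apply,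
      diagonal_map (map_zero f)]
  calc
    _ = f (B.det ^ (Fintype.card m - 1) * (B + U * V).det) := by
      rw [map_mul, map_pow, f.map_det, f.map_det, map_add, RingHom.mapMatrix_apply f (U * V),
        Matrix.map_mul]
    _ = f (B.det • (1 : Matrix m m R[X]) + V * B.adjugate * U).det := congrArg f hlift
    _ = _ := by
      rw [f.map_det, map_add, hsmul, f.map_det, RingHom.mapMatrix_apply f (V * _ * U),
        Matrix.map_mul, Matrix.map_mul, ← f.map_adjugate, f.mapMatrix_apply, f.mapMatrix_apply]

/-- The bilinear form `(v, u) ↦ vᵀ adj(A) u`, which is minus the determinant of `A` bordered by the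
column `u`, the row `vᵀ` and the corner entry `0`. The row comes first. -/
def adjugateForm (A : Matrix n n R) : LinearMap.BilinForm R (n → R) :=
  Matrix.toBilin' A.adjugate

theorem adjugateForm_apply (A : Matrix n n R) (v u : n → R) :
    adjugateForm A v u = v ⬝ᵥ A.adjugate *ᵥ u :=
  Matrix.toBilin'_apply' _ _ _

theorem det_add_vecMulVec (A : Matrix n n R) (u v : n → R) :
    (A + vecMulVec u v).det = A.det + adjugateForm A v u := by
  have h := det_pow_card_sub_one_mul_det_add_mul A (replicateCol Unit u) (replicateRow Unit v)
  rw [Matrix.mul_assoc, ← replicateCol_mulVec, det_unique (n := Unit)] at h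
  simpa [← vecMulVec_eq, adjugateForm_apply, Matrix.mul_apply, dotProduct] using h

theorem det_mul_det_add_vecMulVec_add_vecMulVec (A : Matrix n n R) (u v w z : n → R) :
    A.det * (A + vecMulVec u v + vecMulVec w z).det =
      (A.det + adjugateForm A v u) * (A.det + adjugateForm A z w) -
        adjugateForm A v w * adjugateForm A z u := by
  have h := det_pow_card_sub_one_mul_det_add_mul A (of ![u, w])ᵀ (of ![v, z])
  have hsum : (of ![u, w])ᵀ * of ![v, z] = vecMulVec u v + vecMulVec w z := by
    ext i j
    simp [Matrix.mul_apply, vecMulVec_apply]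
  have hentry (i j : Fin 2) : (of ![v, z] * A.adjugate * (of ![u, w])ᵀ) i j =
      adjugateForm A (![v, z] i) (![u, w] j) := by
    rw [adjugateForm_apply, Matrix.mul_assoc]
    rfl
  rw [hsum, ← add_assoc, det_fin_two] at h
  simp only [Matrix.add_apply, hentry] at h
  simpa using h

theorem adjugateForm_add_vecMulVec_left (A : Matrix n n R) (u v w : n → R) :
    adjugateForm (A + vecMulVec u v) v w = adjugateForm A v w := by
  have h := det_add_vecMulVec (A + vecMulVec u v) w v
  rw [add_assoc, ← add_vecMulVec, det_add_vecMulVec, det_add_vecMulVec, map_add] at h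
  linear_combination -h

theorem adjugateForm_add_vecMulVec_right (A : Matrix n n R) (u v w : n → R) :
    adjugateForm (A + vecMulVec u v) w u = adjugateForm A w u := by
  have h := det_add_vecMulVec (A + vecMulVec u v) u w
  rw [add_assoc, ← vecMulVec_add, det_add_vecMulVec, det_add_vecMulVec, map_add,
    LinearMap.add_apply] at h
  linear_combination -h

-- The Sherman–Morrison formula with denominators cleared.
theorem det_mul_adjugateForm_add_vecMulVec (A : Matrix n n R) (u v w z : n → R) :
    A.det * adjugateForm (A + vecMulVec u v) z w =
      (A + vecMulVec u v).det * adjugateForm A z w - adjugateForm A v w * adjugateForm A z u := by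
  have h := det_mul_det_add_vecMulVec_add_vecMulVec A u v w z
  rw [det_add_vecMulVec (A + vecMulVec u v), det_add_vecMulVec] at h
  rw [det_add_vecMulVec]
  linear_combination h

theorem trace_adjugate_mul_vecMulVec (A : Matrix n n R) (u v : n → R) :
    (A.adjugate * vecMulVec u v).trace = adjugateForm A v u := by
  rw [mul_vecMulVec, trace_vecMulVec, adjugateForm_apply, dotProduct_comm]

theorem trace_adjugate_mul (A B : Matrix n n R) :
    (A.adjugate * B).trace = ∑ i, (A.updateCol i (B.col i)).det := by
  refine Finset.sum_congr rfl fun i _ => ?_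
  rw [← cramer_apply, cramer_eq_adjugate_mulVec]
  rfl

end Determinant

section Derivative

variable {n 𝕜 𝔸 : Type*} [Fintype n] [DecidableEq n] [NontriviallyNormedField 𝕜]
  [NormedCommRing 𝔸] [NormedAlgebra 𝕜 𝔸] {M : 𝕜 → Matrix n n 𝔸} {x : 𝕜}

-- Jacobi's formula.
theorem hasDerivAt_det {M' : Matrix n n 𝔸}
    (hM : ∀ i j, HasDerivAt (fun t => M t i j) (M' i j) x) :
    HasDerivAt (fun t => (M t).det) ((M x).adjugate * M').trace x := by
  have hprod (σ : Equiv.Perm n) := HasDerivAt.fun_finsetProd fun i (_ : i ∈ Finset.univ) =>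
    hM (σ i) i
  have hsum := HasDerivAt.fun_sum fun σ (_ : σ ∈ Finset.univ) =>
    (hprod σ).const_mul ((Equiv.Perm.sign σ : ℤ) : 𝔸)
  simp only [det_apply']
  refine hsum.congr_deriv ?_
  simp only [trace_adjugate_mul, det_apply', Finset.mul_sum]
  rw [Finset.sum_comm]
  refine Finset.sum_congr rfl fun i _ => Finset.sum_congr rfl fun σ _ => ?_
  rw [← Finset.prod_erase_mul _ _ (Finset.mem_univ i), updateCol_self, smul_eq_mul, col_apply]
  congr 2
  exact Finset.prod_congr rfl fun j hj => (updateCol_ne (Finset.ne_of_mem_erase hj)).symm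

theorem hasDerivAt_adjugateForm {u v : 𝕜 → n → 𝔸} {u' v' : n → 𝔸}
    (hM : ∀ i j, HasDerivAt (fun t => M t i j) (u x i * v x j) x)
    (hu : ∀ i, HasDerivAt (fun t => u t i) (u' i) x)
    (hv : ∀ i, HasDerivAt (fun t => v t i) (v' i) x) :
    HasDerivAt (fun t => adjugateForm (M t) (v t) (u t))
      (adjugateForm (M x) (v x) u' + adjugateForm (M x) v' (u x)) x := by
  have hupdate (i j : n) : HasDerivAt (fun t => (M t + vecMulVec (u t) (v t)) i j)
      ((vecMulVec (u x) (v x) + (vecMulVec u' (v x) + vecMulVec (u x) v')) i j) x :=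
    (hM i j).add ((hu i).mul (hv j))
  have hdiff := (hasDerivAt_det hupdate).sub
    (hasDerivAt_det (M' := vecMulVec (u x) (v x)) hM)
  simp only [Matrix.mul_add, trace_add, trace_adjugate_mul_vecMulVec,
    adjugateForm_add_vecMulVec_left, adjugateForm_add_vecMulVec_right, add_sub_cancel_left]
    at hdiff
  refine hdiff.congr_of_eventuallyEq (.of_forall fun t => ?_)
  simp [det_add_vecMulVec]

end Derivative

theorem one_sub_div_zpow_mul_one_add_div_zpow_neg {F : Type*} [Field F] {c : F} (hc : c ≠ 0)
    (x y : F) (k : ℤ) :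
    (1 - x / c) ^ k * (1 + y / c) ^ (-k) = (-((x - c) / (y + c))) ^ k := by
  rw [_root_.zpow_neg, ← div_eq_mul_inv, ← div_zpow, one_sub_div hc, one_add_div hc,
    div_div_div_cancel_right₀ hc, ← neg_div, neg_sub, add_comm c]

namespace KPData

variable {N : ℕ} (K : KPData N)

/-- The matrix `M_{k,l}`, whose determinant is `τ_{k,l}⁽⁰⁾`. -/
def tauMatrix (k l : ℤ) (X : Fin 7 → ℝ) : Matrix (Fin N) (Fin N) ℂ :=
  of fun i j => K.ment k l i j X

/-- The vector `Φ_{k,l}`, the column of the rank-one derivative `∂_{x₁} M_{k,l}`. -/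
def phiVec (k l : ℤ) (X : Fin 7 → ℝ) : Fin N → ℂ := fun i => K.phi k l i X

/-- The vector `Φ̄_{k,l}`, the row of the rank-one derivative `∂_{x₁} M_{k,l}`. -/
def phibVec (k l : ℤ) (X : Fin 7 → ℝ) : Fin N → ℂ := fun j => K.phib k l j X

theorem tau0_eq_det_tauMatrix (k l : ℤ) (X : Fin 7 → ℝ) :
    K.tau0 k l X = (K.tauMatrix k l X).det :=
  rfl

section Derivative

variable (k l : ℤ) (i j : Fin N) (X : Fin 7 → ℝ)

theorem hasDerivAt_xi_update_zero :
    HasDerivAt (fun s => K.xi i (Function.update X 0 s)) (K.p i) (X 0) := by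
  simpa [xi, Function.update] using ofRealCLM.hasDerivAt.const_mul (K.p i)

theorem hasDerivAt_xi_update_one :
    HasDerivAt (fun s => K.xi i (Function.update X 1 s)) (K.p i ^ 2) (X 1) := by
  simpa [xi, Function.update] using ofRealCLM.hasDerivAt.const_mul (K.p i ^ 2)

theorem hasDerivAt_xib_update_zero :
    HasDerivAt (fun s => K.xib j (Function.update X 0 s)) (K.pb j) (X 0) := by
  simpa [xib, Function.update] using ofRealCLM.hasDerivAt.const_mul (K.pb j)

theorem hasDerivAt_xib_update_one :
    HasDerivAt (fun s => K.xib j (Function.update X 1 s)) (-K.pb j ^ 2) (X 1) := by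
  simpa [xib, Function.update] using
    (ofRealCLM.hasDerivAt.const_mul (K.pb j ^ 2)).const_sub (K.pb j * X 0)

theorem hasDerivAt_phi_update_zero :
    HasDerivAt (fun s => K.phi k l i (Function.update X 0 s)) (K.p i * K.phi k l i X) (X 0) := by
  have h := (K.hasDerivAt_xi_update_zero i X).cexp.const_mul
    ((1 - K.p i / K.a) ^ k * (1 - K.p i / K.b) ^ l)
  refine h.congr_deriv ?_
  rw [Function.update_eq_self, phi]
  ring

theorem hasDerivAt_phib_update_zero :
    HasDerivAt (fun s => K.phib k l j (Function.update X 0 s)) (K.pb j * K.phib k l j X)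
      (X 0) := by
  have h := (K.hasDerivAt_xib_update_zero j X).cexp.const_mul
    ((1 + K.pb j / K.a) ^ (-k) * (1 + K.pb j / K.b) ^ (-l))
  refine h.congr_deriv ?_
  rw [Function.update_eq_self, phib]
  ring

variable {K}

theorem phi_mul_phib (ha : K.a ≠ 0) (hb : K.b ≠ 0) :
    K.phi k l i X * K.phib k l j X =
      (-((K.p i - K.a) / (K.pb j + K.a))) ^ k * (-((K.p i - K.b) / (K.pb j + K.b))) ^ l *
        exp (K.xi i X + K.xib j X) := by
  rw [← one_sub_div_zpow_mul_one_add_div_zpow_neg ha,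
    ← one_sub_div_zpow_mul_one_add_div_zpow_neg hb, exp_add, phi, phib]
  ring

theorem ment_eq (ha : K.a ≠ 0) (hb : K.b ≠ 0) :
    K.ment k l i j X = 1 / (K.p i + K.pb j) * (K.phi k l i X * K.phib k l j X) +
      K.Ct i * K.Cb j * exp (K.eta i X + K.etab j X) / (K.q i + K.qb j) +
      K.Dt i * K.Db j * exp (K.chi i X + K.chib j X) / (K.r i + K.rb j) := by
  rw [ment, phi_mul_phib k l i j X ha hb]
  ring

theorem hasDerivAt_ment_update {c : Fin 7} {d db : ℂ} (ha : K.a ≠ 0) (hb : K.b ≠ 0)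
    (h5 : c ≠ 5) (h6 : c ≠ 6)
    (hxi : HasDerivAt (fun s => K.xi i (Function.update X c s)) d (X c))
    (hxib : HasDerivAt (fun s => K.xib j (Function.update X c s)) db (X c)) :
    HasDerivAt (fun s => K.ment k l i j (Function.update X c s))
      ((d + db) / (K.p i + K.pb j) * (K.phi k l i X * K.phib k l j X)) (X c) := by
  have h := (hxi.add hxib).cexp.const_mul (1 / (K.p i + K.pb j) *
    (-((K.p i - K.a) / (K.pb j + K.a))) ^ k * (-((K.p i - K.b) / (K.pb j + K.b))) ^ l)
  simp only [ment, eta, etab, chi, chib, Function.update_of_ne h5.symm,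
    Function.update_of_ne h6.symm]
  refine ((h.add_const _).add_const _).congr_deriv ?_
  rw [phi_mul_phib k l i j X ha hb]
  simp only [Pi.add_apply, Function.update_eq_self]
  ring

theorem hasDerivAt_tauMatrix_update_zero (ha : K.a ≠ 0) (hb : K.b ≠ 0)
    (hp : ∀ i j, K.p i + K.pb j ≠ 0) :
    HasDerivAt (fun s => K.tauMatrix k l (Function.update X 0 s) i j)
      (vecMulVec (K.phiVec k l X) (K.phibVec k l X) i j) (X 0) := by
  have h := hasDerivAt_ment_update k l i j X ha hb (by decide) (by decide)
    (K.hasDerivAt_xi_update_zero i X) (K.hasDerivAt_xib_update_zero j X)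
  rw [div_self (hp i j), one_mul] at h
  exact h

theorem hasDerivAt_tauMatrix_update_one (ha : K.a ≠ 0) (hb : K.b ≠ 0)
    (hp : ∀ i j, K.p i + K.pb j ≠ 0) :
    HasDerivAt (fun s => K.tauMatrix k l (Function.update X 1 s) i j)
      ((vecMulVec (K.p * K.phiVec k l X) (K.phibVec k l X) -
        vecMulVec (K.phiVec k l X) (K.pb * K.phibVec k l X)) i j) (X 1) := by
  have h := hasDerivAt_ment_update k l i j X ha hb (by decide) (by decide)
    (K.hasDerivAt_xi_update_one i X) (K.hasDerivAt_xib_update_one j X)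
  have hquot : (K.p i ^ 2 + -K.pb j ^ 2) / (K.p i + K.pb j) = K.p i - K.pb j := by
    rw [div_eq_iff (hp i j)]
    ring
  refine h.congr_deriv ?_
  simp only [hquot, Matrix.sub_apply, vecMulVec_apply, Pi.mul_apply, phiVec, phibVec]
  ring

theorem pd_zero_tau0 (ha : K.a ≠ 0) (hb : K.b ≠ 0) (hp : ∀ i j, K.p i + K.pb j ≠ 0) :
    pd 0 (K.tau0 k l) X =
      adjugateForm (K.tauMatrix k l X) (K.phibVec k l X) (K.phiVec k l X) := by
  have h := hasDerivAt_det (M := fun s => K.tauMatrix k l (Function.update X 0 s))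
    (M' := vecMulVec (K.phiVec k l X) (K.phibVec k l X))
    fun i j => hasDerivAt_tauMatrix_update_zero k l i j X ha hb hp
  rw [Function.update_eq_self] at h
  exact h.deriv.trans (trace_adjugate_mul_vecMulVec _ _ _)

theorem pd_one_tau0 (ha : K.a ≠ 0) (hb : K.b ≠ 0) (hp : ∀ i j, K.p i + K.pb j ≠ 0) :
    pd 1 (K.tau0 k l) X =
      adjugateForm (K.tauMatrix k l X) (K.phibVec k l X) (K.p * K.phiVec k l X) -
        adjugateForm (K.tauMatrix k l X) (K.pb * K.phibVec k l X) (K.phiVec k l X) := by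
  have h := hasDerivAt_det (M := fun s => K.tauMatrix k l (Function.update X 1 s))
    (M' := vecMulVec (K.p * K.phiVec k l X) (K.phibVec k l X) -
      vecMulVec (K.phiVec k l X) (K.pb * K.phibVec k l X))
    fun i j => hasDerivAt_tauMatrix_update_one k l i j X ha hb hp
  rw [Function.update_eq_self, Matrix.mul_sub, trace_sub, trace_adjugate_mul_vecMulVec,
    trace_adjugate_mul_vecMulVec] at h
  exact h.deriv

theorem pd_zero_pd_zero_tau0 (ha : K.a ≠ 0) (hb : K.b ≠ 0)
    (hp : ∀ i j, K.p i + K.pb j ≠ 0) :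
    pd 0 (pd 0 (K.tau0 k l)) X =
      adjugateForm (K.tauMatrix k l X) (K.phibVec k l X) (K.p * K.phiVec k l X) +
        adjugateForm (K.tauMatrix k l X) (K.pb * K.phibVec k l X) (K.phiVec k l X) := by
  have hpd : pd 0 (K.tau0 k l) = fun Y =>
      adjugateForm (K.tauMatrix k l Y) (K.phibVec k l Y) (K.phiVec k l Y) :=
    funext fun Y => pd_zero_tau0 k l Y ha hb hp
  rw [hpd]
  have h := hasDerivAt_adjugateForm (x := X 0)
    (M := fun s => K.tauMatrix k l (Function.update X 0 s))
    (u := fun s => K.phiVec k l (Function.update X 0 s))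
    (v := fun s => K.phibVec k l (Function.update X 0 s))
    (fun i j => by
      simpa [vecMulVec_apply] using hasDerivAt_tauMatrix_update_zero k l i j X ha hb hp)
    (K.hasDerivAt_phi_update_zero k l · X) (K.hasDerivAt_phib_update_zero k l · X)
  simp only [Function.update_eq_self] at h
  exact h.deriv

end Derivative

section Shift

variable {K} (k l : ℤ) (X : Fin 7 → ℝ)

theorem phiVec_add_one (ha : K.a ≠ 0) (hpa : ∀ i, K.p i ≠ K.a) :
    K.phiVec (k + 1) l X = K.phiVec k l X - K.a⁻¹ • (K.p * K.phiVec k l X) := by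
  funext i
  have h : 1 - K.p i / K.a ≠ 0 := by
    rw [one_sub_div ha]
    exact div_ne_zero (sub_ne_zero.2 (hpa i).symm) ha
  simp only [phiVec, phi, zpow_add_one₀ h, Pi.sub_apply, Pi.smul_apply, Pi.mul_apply, smul_eq_mul]
  ring

theorem phibVec_eq_phibVec_add_one (ha : K.a ≠ 0) (hpba : ∀ j, K.pb j ≠ -K.a) :
    K.phibVec k l X = K.phibVec (k + 1) l X + K.a⁻¹ • (K.pb * K.phibVec (k + 1) l X) := by
  funext j
  have h : 1 + K.pb j / K.a ≠ 0 := by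
    rw [one_add_div ha, add_comm]
    exact div_ne_zero (mt eq_neg_of_add_eq_zero_left (hpba j)) ha
  have hpow : (1 + K.pb j / K.a) ^ (-k) =
      (1 + K.pb j / K.a) ^ (-(k + 1)) * (1 + K.pb j / K.a) := by
    rw [← zpow_add_one₀ h]
    ring_nf
  simp only [phibVec, phib, hpow, Pi.add_apply, Pi.smul_apply, Pi.mul_apply, smul_eq_mul]
  ring

theorem tauMatrix_add_one (ha : K.a ≠ 0) (hb : K.b ≠ 0) (hp : ∀ i j, K.p i + K.pb j ≠ 0)
    (hpa : ∀ i, K.p i ≠ K.a) (hpba : ∀ j, K.pb j ≠ -K.a) :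
    K.tauMatrix (k + 1) l X =
      K.tauMatrix k l X + vecMulVec (-K.a⁻¹ • K.phiVec k l X) (K.phibVec (k + 1) l X) := by
  ext i j
  have hphi : K.phi (k + 1) l i X = K.phi k l i X - K.a⁻¹ * (K.p i * K.phi k l i X) :=
    congrFun (phiVec_add_one k l X ha hpa) i
  have hphib : K.phib k l j X =
      K.phib (k + 1) l j X + K.a⁻¹ * (K.pb j * K.phib (k + 1) l j X) :=
    congrFun (phibVec_eq_phibVec_add_one k l X ha hpba) j
  have hpij := hp i j
  simp only [tauMatrix, ment_eq _ _ _ _ _ ha hb, of_apply, Matrix.add_apply, vecMulVec_apply,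
    Pi.smul_apply, smul_eq_mul, phiVec, phibVec, hphi, hphib]
  field_simp
  ring

theorem mul_adjugateForm_tauMatrix (ha : K.a ≠ 0) (hb : K.b ≠ 0)
    (hp : ∀ i j, K.p i + K.pb j ≠ 0) (hpa : ∀ i, K.p i ≠ K.a) :
    2 * K.a * adjugateForm (K.tauMatrix k l X) (K.phibVec k l X) (K.phiVec (k + 1) l X) =
      2 * K.a * pd 0 (K.tau0 k l) X - pd 0 (pd 0 (K.tau0 k l)) X - pd 1 (K.tau0 k l) X := by
  rw [phiVec_add_one k l X ha hpa, pd_zero_pd_zero_tau0 k l X ha hb hp,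
    pd_one_tau0 k l X ha hb hp, pd_zero_tau0 k l X ha hb hp, map_sub, map_smul, smul_eq_mul]
  field_simp
  ring

theorem mul_adjugateForm_tauMatrix_add_one (ha : K.a ≠ 0) (hb : K.b ≠ 0)
    (hp : ∀ i j, K.p i + K.pb j ≠ 0) (hpba : ∀ j, K.pb j ≠ -K.a) :
    2 * K.a * adjugateForm (K.tauMatrix (k + 1) l X) (K.phibVec k l X) (K.phiVec (k + 1) l X) =
      2 * K.a * pd 0 (K.tau0 (k + 1) l) X + pd 0 (pd 0 (K.tau0 (k + 1) l)) X -
        pd 1 (K.tau0 (k + 1) l) X := by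
  rw [phibVec_eq_phibVec_add_one k l X ha hpba, pd_zero_pd_zero_tau0 (k + 1) l X ha hb hp,
    pd_one_tau0 (k + 1) l X ha hb hp, pd_zero_tau0 (k + 1) l X ha hb hp, map_add, map_smul,
    LinearMap.add_apply, LinearMap.smul_apply, smul_eq_mul]
  field_simp
  ring

theorem mul_tau0_mul_adjugateForm_sub (ha : K.a ≠ 0) (hb : K.b ≠ 0)
    (hp : ∀ i j, K.p i + K.pb j ≠ 0) (hpa : ∀ i, K.p i ≠ K.a) (hpba : ∀ j, K.pb j ≠ -K.a) :
    K.a * (K.tau0 k l X *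
        adjugateForm (K.tauMatrix (k + 1) l X) (K.phibVec k l X) (K.phiVec (k + 1) l X) -
      K.tau0 (k + 1) l X *
        adjugateForm (K.tauMatrix k l X) (K.phibVec k l X) (K.phiVec (k + 1) l X)) =
      pd 0 (K.tau0 (k + 1) l) X * pd 0 (K.tau0 k l) X := by
  have hshift := tauMatrix_add_one k l X ha hb hp hpa hpba
  have hjacobi := det_mul_adjugateForm_add_vecMulVec (K.tauMatrix k l X)
    (-K.a⁻¹ • K.phiVec k l X) (K.phibVec (k + 1) l X) (K.phiVec (k + 1) l X) (K.phibVec k l X)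
  have hsucc := adjugateForm_add_vecMulVec_left (K.tauMatrix k l X)
    (-K.a⁻¹ • K.phiVec k l X) (K.phibVec (k + 1) l X) (K.phiVec (k + 1) l X)
  rw [← hsucc, ← hshift, map_smul, smul_eq_mul, ← pd_zero_tau0 k l X ha hb hp,
    ← pd_zero_tau0 (k + 1) l X ha hb hp] at hjacobi
  simp only [tau0_eq_det_tauMatrix]
  rw [hjacobi]
  field_simp
  ring

end Shift

end KPData

theorem stmt19 {N : ℕ} (hN : 1 ≤ N) (K : KPData N) (hnd : K.Nondeg) :
    ∀ (k l : ℤ) (X : Fin 7 → ℝ),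
      pd 0 (pd 0 (K.tau0 (k + 1) l)) X * K.tau0 k l X
          - 2 * pd 0 (K.tau0 (k + 1) l) X * pd 0 (K.tau0 k l) X
          + K.tau0 (k + 1) l X * pd 0 (pd 0 (K.tau0 k l)) X
          - (pd 1 (K.tau0 (k + 1) l) X * K.tau0 k l X
              - K.tau0 (k + 1) l X * pd 1 (K.tau0 k l) X)
          + 2 * K.a * (pd 0 (K.tau0 (k + 1) l) X * K.tau0 k l X
              - K.tau0 (k + 1) l X * pd 0 (K.tau0 k l) X)
        = 0 := by
  intro k l X
  obtain ⟨ha, hb, hpab, hpbab, hp, -, -⟩ := hnd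
  have hpa i := (hpab i).1
  have hpba j := (hpbab j).1
  have hbilin := KPData.mul_tau0_mul_adjugateForm_sub k l X ha hb hp hpa hpba
  have hleft := KPData.mul_adjugateForm_tauMatrix k l X ha hb hp hpa
  have hright := KPData.mul_adjugateForm_tauMatrix_add_one k l X ha hb hp hpba
  linear_combination 2 * hbilin + K.tau0 (k + 1) l X * hleft - K.tau0 k l X * hright

end
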